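/- arXiv:1203.5487 — 4 statements merged into one kernel-verified Lean document; each statement's English description precedes it below -/
import Mathlib

section
/- Suppose u, v, w are three distinct pairwise adjacent vertices of the weak reducing graph G on A × B. Then either u, v, w all have the same first coordinate, or u, v, w all have the same second coordinate. (This is the combinatorial content of Lemma 1 of the paper: every 2-simplex of the complex of weak reducing pairs has the form (D,E)–(D,E')–(D,E'')–(D,E) or (D,E)–(D',E)–(D'',E)–(D,E).) -/
/-- Lemma 1 (combinatorial content): every 2-simplex of the complex of weak
reducing pairs has the form `(D,E)-(D,E')-(D,E'')-(D,E)` or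
`(D,E)-(D',E)-(D'',E)-(D,E)`.  Here `G` is the weak reducing graph on `A × B`:
two distinct vertices `(D,E)` and `(D',E')` are adjacent iff
`(D = D' ∧ R_B E E')` or `(R_A D D' ∧ E = E')`. -/
theorem stmt_0 {A B : Type*} (RA : A → A → Prop) (RB : B → B → Prop)
    (hRAsymm : Symmetric RA) (hRAirr : Irreflexive RA)
    (hRBsymm : Symmetric RB) (hRBirr : Irreflexive RB)
    (G : SimpleGraph (A × B))
    (hG : ∀ v w : A × B,
      G.Adj v w ↔ (v.1 = w.1 ∧ RB v.2 w.2) ∨ (RA v.1 w.1 ∧ v.2 = w.2))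
    (u v w : A × B) (huv : u ≠ v) (hvw : v ≠ w) (huw : u ≠ w)
    (auv : G.Adj u v) (avw : G.Adj v w) (auw : G.Adj u w) :
    (u.1 = v.1 ∧ v.1 = w.1) ∨ (u.2 = v.2 ∧ v.2 = w.2) := by
  -- Each edge fixes a coordinate. By pigeonhole two of the three edges fix the same one, and any two
  -- edges of a triangle cover its three vertices, so all three vertices agree there.
  have fixes : ∀ x y : A × B, G.Adj x y → x.1 = y.1 ∨ x.2 = y.2 := fun x y h =>
    ((hG x y).1 h).imp And.left And.right
  rcases fixes u v auv with h₁ | h₁ <;> rcases fixes v w avw with h₂ | h₂ <;>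
    rcases fixes u w auw with h₃ | h₃ <;> grind
end

section
/- Let n ≥ 1 and let v_0, v_1, …, v_n be distinct, pairwise adjacent vertices of the weak reducing graph G on A × B (i.e., the vertices of an n-simplex of WR). Then either all of v_0, …, v_n have the same first coordinate, or all of v_0, …, v_n have the same second coordinate. (This is the combinatorial content of Lemma 2 of the paper: every n-simplex of WR has vertices of the form (D_0,E), …, (D_n,E) or of the form (D,E_0), …, (D,E_n).) -/
/-!
Adjacent vertices share a coordinate. If `v i` and `v j` differ in the first coordinate, they share
a second coordinate `E`, and any further vertex must share a coordinate with each of them; it cannot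
agree with both in the first coordinate, so its second coordinate is `E` as well.
-/

/-- Lemma 2 (combinatorial content): for `n ≥ 1`, the `n + 1` distinct, pairwise
adjacent vertices `v 0, …, v n` of an `n`-simplex of the weak reducing graph `G`
on `A × B` either all have the same first coordinate or all have the same second
coordinate. -/
theorem stmt_1 {A B : Type*} (RA : A → A → Prop) (RB : B → B → Prop)
    (hRAsymm : Symmetric RA) (hRAirr : Irreflexive RA)
    (hRBsymm : Symmetric RB) (hRBirr : Irreflexive RB)
    (G : SimpleGraph (A × B))
    (hG : ∀ v w : A × B,
      G.Adj v w ↔ (v.1 = w.1 ∧ RB v.2 w.2) ∨ (RA v.1 w.1 ∧ v.2 = w.2))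
    (n : ℕ) (hn : 1 ≤ n) (v : Fin (n + 1) → A × B)
    (hinj : Function.Injective v)
    (hadj : ∀ i j : Fin (n + 1), i ≠ j → G.Adj (v i) (v j)) :
    (∀ i j : Fin (n + 1), (v i).1 = (v j).1) ∨
      (∀ i j : Fin (n + 1), (v i).2 = (v j).2) := by
  have share : ∀ i j, (v i).1 = (v j).1 ∨ (v i).2 = (v j).2 := by
    intro i j
    by_cases hij : i = j
    · exact Or.inl (by rw [hij])
    · exact ((hG _ _).1 (hadj i j hij)).imp And.left And.right
  by_cases h : ∀ i j, (v i).1 = (v j).1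
  · exact Or.inl h
  · right
    push Not at h
    obtain ⟨i, j, hij⟩ := h
    have hij₂ : (v i).2 = (v j).2 := (share i j).resolve_left hij
    have key : ∀ k, (v k).2 = (v i).2 := by
      intro k
      rcases share k i with hki | hki
      · rcases share k j with hkj | hkj
        · exact absurd (hki.symm.trans hkj) hij
        · exact hkj.trans hij₂.symm
      · exact hki
    intro k l
    exact (key k).trans (key l).symm
end

section
/- Let (D,E) and (D',E') be weak reducing pairs, i.e., C D E and C D' E' hold. Then the vertices (D,E) and (D',E') are joined by a walk in the weak reducing graph G if and only if there exist m ≥ 0 and elements D_0, …, D_m of A and E_0, …, E_m of B with D_0 = D, E_0 = E, D_m = D', E_m = E', such that: C D_i E_i for all 0 ≤ i ≤ m; C D_{i+1} E_i for all 0 ≤ i ≤ m−1; for each 0 ≤ i ≤ m−1, either D_i = D_{i+1} or R_A D_i D_{i+1}; and for each 0 ≤ i ≤ m−1, either E_i = E_{i+1} or R_B E_i E_{i+1}. (This is the equivalence proved in Proposition 2 of the paper: two weak reducing pairs are connected by a union of 1-simplices in WR if and only if Bachman's distance between them, defined via sequences D = D_0 − E = E_0 − D_1 − E_1 − ⋯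 − D' = D_m − E' = E_m, is finite.) -/
/-! The zigzag `(D_i, E_i) — (D_{i+1}, E_i) — (D_{i+1}, E_{i+1})` has all of its corners among the
weak reducing pairs, and each of its two moves changes a single coordinate, hence is trivial or an
edge of `G`; so a Bachman sequence yields a walk. Conversely an edge of `G` is itself one step of a
Bachman sequence, the middle corner `(D_{i+1}, E_i)` being one of its endpoints, so a walk of
length `m` is a Bachman sequence of length `m`. -/


/-- Proposition 2 (combinatorial content): two weak reducing pairs `(D,E)` and
`(D',E')` are joined by a walk in the weak reducing graph `G` (whose vertices
are the pairs `(D,E)` with `C D E`) if and only if Bachman's distance between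
them is finite, i.e. there is a sequence
`D = D_0 − E = E_0 − D_1 − E_1 − ⋯ − D' = D_m − E' = E_m` in which consecutive
disks on the same side are equal or disjoint and all pairs `(D_i, E_i)` and
`(D_{i+1}, E_i)` are weak reducing pairs. -/
theorem stmt_3 {A B : Type*} (RA : A → A → Prop) (RB : B → B → Prop)
    (hRAsymm : Symmetric RA) (hRAirr : Irreflexive RA)
    (hRBsymm : Symmetric RB) (hRBirr : Irreflexive RB)
    (C : A → B → Prop)
    (G : SimpleGraph {p : A × B // C p.1 p.2})
    (hG : ∀ v w : {p : A × B // C p.1 p.2},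
      G.Adj v w ↔
        (v.val.1 = w.val.1 ∧ RB v.val.2 w.val.2) ∨
          (RA v.val.1 w.val.1 ∧ v.val.2 = w.val.2))
    (D D' : A) (E E' : B) (hDE : C D E) (hD'E' : C D' E') :
    G.Reachable ⟨(D, E), hDE⟩ ⟨(D', E'), hD'E'⟩ ↔
      ∃ (m : ℕ) (Ds : Fin (m + 1) → A) (Es : Fin (m + 1) → B),
        Ds 0 = D ∧ Es 0 = E ∧ Ds (Fin.last m) = D' ∧ Es (Fin.last m) = E' ∧
        (∀ i : Fin (m + 1), C (Ds i) (Es i)) ∧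
        (∀ i : Fin m, C (Ds i.succ) (Es i.castSucc)) ∧
        (∀ i : Fin m, Ds i.castSucc = Ds i.succ ∨ RA (Ds i.castSucc) (Ds i.succ)) ∧
        (∀ i : Fin m, Es i.castSucc = Es i.succ ∨ RB (Es i.castSucc) (Es i.succ)) := by
  constructor
  · rintro ⟨p⟩
    -- The sequence is the list of vertices of the walk, indexed by `getVert`.
    refine ⟨p.length, fun i => (p.getVert i).val.1, fun i => (p.getVert i).val.2,
      by simp, by simp, by simp, by simp, fun i => (p.getVert i).property, ?_, ?_, ?_⟩
    all_goals
      intro i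
      have hadj := (hG _ _).1 (p.adj_getVert_succ i.isLt)
      simp only [Fin.val_succ, Fin.val_castSucc]
    · -- The middle corner has the same coordinates as one endpoint of the edge.
      rcases hadj with ⟨h, -⟩ | ⟨-, h⟩
      · rw [← h]
        exact (p.getVert i).property
      · rw [h]
        exact (p.getVert (i + 1)).property
    · exact hadj.imp And.left And.left
    · exact hadj.symm.imp And.right And.right
  · rintro ⟨m, Ds, Es, rfl, rfl, rfl, rfl, hC, hC', hD, hE⟩
    have key : ∀ i : Fin (m + 1),
        G.Reachable ⟨(Ds 0, Es 0), hC 0⟩ ⟨(Ds i, Es i), hC i⟩ := by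
      intro i
      induction i using Fin.induction with
      | zero => exact SimpleGraph.Reachable.refl _
      | succ i ih =>
        have h₁ : G.Reachable ⟨(Ds i.castSucc, Es i.castSucc), hC _⟩
            ⟨(Ds i.succ, Es i.castSucc), hC' i⟩ := by
          rcases hD i with h | h
          · simp only [h]
            exact SimpleGraph.Reachable.refl _
          · exact SimpleGraph.Adj.reachable (by rw [hG]; exact Or.inr ⟨h, rfl⟩)
        have h₂ : G.Reachable ⟨(Ds i.succ, Es i.castSucc), hC' i⟩
            ⟨(Ds i.succ, Es i.succ), hC _⟩ := by
          rcases hE i with h | h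
          · simp only [h]
            exact SimpleGraph.Reachable.refl _
          · exact SimpleGraph.Adj.reachable (by rw [hG]; exact Or.inl ⟨rfl, h⟩)
        exact (ih.trans h₁).trans h₂
    exact key (Fin.last m)
end

section
/- Suppose the weak reducing graph G contains no length-two path whose two edges have different labels; that is, there do not exist vertices p, q, r of G with p adjacent to q, q adjacent to r, p ≠ r, such that one of the two edges has equal first coordinates (an E-edge) and the other has equal second coordinates (a D-edge). Suppose (D_0,E_0) and (D_1,E_1) are weak reducing pairs (C D_0 E_0 and C D_1 E_1 hold) such that ¬ C D_0 E_1 and ¬ C D_1 E_0. Then no walk in G joins the vertex (D_0,E_0) to the vertex (D_1,E_1); in particular G is disconnected. (This is the combinatorial skeleton of Theorem 14 of the paper: if no four disks satisfy the four conditions of Corollary 13 — which forbids two consecutive edges of WR with different labels — and there are weak reducing pairs (D_0,E_0), (D_1,E_1) with ∂D_0 ∩ ∂E_1 ≠ ∅ and ∂D_1 ∩ ∂E_0 ≠ ∅, then WR is disconnected, and hence the splitting is critical.) -/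
/-! By the absence of mixed length-two paths, all edges of a walk carry the same label, so one
coordinate is constant along the walk. Hence the endpoints of any walk share a coordinate; if
`D₀ = D₁` then `C D₁ E₀` holds, and if `E₀ = E₁` then `C D₀ E₁` holds. -/

/-- Combinatorial skeleton of Theorem 14: suppose the weak reducing graph `G`
(whose vertices are the pairs `(D,E)` with `C D E`) contains no length-two path
whose two edges have different labels (an E-edge has equal first coordinates, a
D-edge has equal second coordinates).  If `(D_0,E_0)` and `(D_1,E_1)` are weak
reducing pairs with `¬ C D_0 E_1` and `¬ C D_1 E_0`, then no walk in `G` joins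
`(D_0,E_0)` to `(D_1,E_1)`; in particular `G` is disconnected. -/
theorem stmt_4 {A B : Type*} (RA : A → A → Prop) (RB : B → B → Prop)
    (hRAsymm : Symmetric RA) (hRAirr : Irreflexive RA)
    (hRBsymm : Symmetric RB) (hRBirr : Irreflexive RB)
    (C : A → B → Prop)
    (G : SimpleGraph {p : A × B // C p.1 p.2})
    (hG : ∀ v w : {p : A × B // C p.1 p.2},
      G.Adj v w ↔
        (v.val.1 = w.val.1 ∧ RB v.val.2 w.val.2) ∨
          (RA v.val.1 w.val.1 ∧ v.val.2 = w.val.2))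
    (hNoMixed : ¬ ∃ p q r : {p : A × B // C p.1 p.2},
      G.Adj p q ∧ G.Adj q r ∧ p ≠ r ∧
        ((p.val.1 = q.val.1 ∧ q.val.2 = r.val.2) ∨
          (p.val.2 = q.val.2 ∧ q.val.1 = r.val.1)))
    (D₀ D₁ : A) (E₀ E₁ : B) (h₀ : C D₀ E₀) (h₁ : C D₁ E₁)
    (h01 : ¬ C D₀ E₁) (h10 : ¬ C D₁ E₀) :
    ¬ G.Reachable ⟨(D₀, E₀), h₀⟩ ⟨(D₁, E₁), h₁⟩ ∧ ¬ G.Connected := by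
  have key : ¬ G.Reachable ⟨(D₀, E₀), h₀⟩ ⟨(D₁, E₁), h₁⟩ := by
    intro h
    rw [SimpleGraph.reachable_iff_reflTransGen] at h
    -- The label of the last edge is carried along with the constant coordinate, so that the
    -- invariant passes from a walk to its extension by one edge.
    have inv : ∀ w, Relation.ReflTransGen G.Adj ⟨(D₀, E₀), h₀⟩ w →
        w = ⟨(D₀, E₀), h₀⟩ ∨
        (w.val.1 = D₀ ∧ ∃ u, G.Adj u w ∧ u.val.1 = w.val.1) ∨
        (w.val.2 = E₀ ∧ ∃ u, G.Adj u w ∧ u.val.2 = w.val.2) := by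
      intro w hw
      induction hw with
      | refl => exact Or.inl rfl
      | @tail w x _ hwx ih =>
        have hx : w.val.1 = x.val.1 ∨ w.val.2 = x.val.2 :=
          ((hG w x).1 hwx).imp And.left And.right
        rcases ih with rfl | ⟨hw, u, huw, hu⟩ | ⟨hw, u, huw, hu⟩
        · rcases hx with hx | hx
          · exact Or.inr (Or.inl ⟨hx.symm, _, hwx, hx⟩)
          · exact Or.inr (Or.inr ⟨hx.symm, _, hwx, hx⟩)
        · rcases hx with hx | hx
          · exact Or.inr (Or.inl ⟨hx.symm.trans hw, _, hwx, hx⟩)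
          · refine (hNoMixed ⟨u, w, x, huw, hwx, ?_, Or.inl ⟨hu, hx⟩⟩).elim
            rintro rfl
            exact huw.ne (Subtype.ext (Prod.ext hu hx.symm))
        · rcases hx with hx | hx
          · refine (hNoMixed ⟨u, w, x, huw, hwx, ?_, Or.inr ⟨hu, hx⟩⟩).elim
            rintro rfl
            exact huw.ne (Subtype.ext (Prod.ext hx.symm hu))
          · exact Or.inr (Or.inr ⟨hx.symm.trans hw, _, hwx, hx⟩)
    rcases inv _ h with he | ⟨he, -⟩ | ⟨he, -⟩
    · obtain ⟨rfl, rfl⟩ := Prod.mk.inj (Subtype.mk.inj he)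
      exact h01 h₀
    · dsimp only at he
      subst he
      exact h10 h₀
    · dsimp only at he
      subst he
      exact h01 h₀
  exact ⟨key, fun hc => key (hc.preconnected _ _)⟩
end
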